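/- Let δ ∈ (0,1), k ≥ 2 and ρ > 0, and let {(S_i,G_i)}_{i≥1} be a sequence of systems of configurations of degree k such that every (S_i,G_i) is ρ-k-uniform. Set p_i = max over ℓ ∈ {2,…,k} of (α_ℓ^k(S_i,G_i)/α_1^k(S_i,G_i))^{1/(ℓ−1)}. Then there exists c > 0, depending only on δ, k and ρ, such that the following holds: if p(i) ∈ [0,1] is a sequence with p(i)·|G_i| → ∞ and p(i)·|S_i^{(k)}|^{1/k} → ∞, with p(i) ≤ c·p_i for all i, and the sequence {(S_i,G_i)} is concentrated for p, then P_{p(i)}({A ⊆ G_i : A is (δ,S_i)_k-stable}) → 0 as i → ∞. -/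

import Mathlib

open Finset Filter Topology

attribute [local instance] Classical.propDecidable

/-- The set `S^{(k)}` of tuples of `S` with pairwise distinct entries. -/
noncomputable def distinctPart {k : ℕ} {G : Type} (S : Finset (Fin k → G)) :
    Finset (Fin k → G) :=
  S.filter fun x => Function.Injective x

/-- The restricted `ℓ`-th degree of freedom `α_ℓ^k(S,G)`. -/
noncomputable def alphaR {k : ℕ} {G : Type} [Fintype G] (S : Finset (Fin k → G)) (ℓ : ℕ) : ℕ :=
  (Finset.univ.filter fun U : Finset (Fin k) => U.card = ℓ).sup fun U =>
    Finset.univ.sup fun g : Fin k → G =>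
      ((distinctPart S).filter fun x => ∀ j ∈ U, x j = g j).card

/-- `|π_U(S)|`: the number of projections of tuples of `S` to the coordinates in `U`. -/
noncomputable def projCard {k : ℕ} {G : Type} (S : Finset (Fin k → G))
    (U : Finset (Fin k)) : ℕ :=
  (S.image (fun x => fun j : {a : Fin k // a ∈ U} => x j.1)).card

/-- `|π_U(S) ∩ A^{|U|}|`. -/
noncomputable def projCardIn {k : ℕ} {G : Type} (S : Finset (Fin k → G))
    (U : Finset (Fin k)) (A : Finset G) : ℕ :=
  ((S.filter (fun x => ∀ j ∈ U, x j ∈ A)).image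
    (fun x => fun j : {a : Fin k // a ∈ U} => x j.1)).card

/-- Probability assigned to a family `E` of subsets of `G` by the binomial random subset
`[G]_p`. -/
noncomputable def binomProb {G : Type} [Fintype G] (p : ℝ) (E : Finset (Finset G)) : ℝ :=
  ∑ A ∈ E, p ^ A.card * (1 - p) ^ (Fintype.card G - A.card)

/-- `X` is `(δ,S)_k`-stable. -/
def StableK {k : ℕ} {G : Type} (δ : ℝ) (S : Finset (Fin k → G)) (X : Finset G) : Prop :=
  ∀ X' ⊆ X, δ * (X.card : ℝ) ≤ (X'.card : ℝ) →
    (∃ x ∈ S, ∀ j, x j ∈ X') ∧ (∃ x ∈ distinctPart S, ∀ j, x j ∈ X')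

/-- The sequence `{(S_i,G_i)}` is concentrated for the probability sequence `p`. -/
def Concentrated (k : ℕ) (G : ℕ → Type) [∀ i, Fintype (G i)]
    (S : ∀ i, Finset (Fin k → G i)) (p : ℕ → ℝ) : Prop :=
  ∀ ε ε' : ℝ, 0 < ε → 0 < ε' → ∃ n₀ : ℕ, ∀ i, n₀ ≤ Fintype.card (G i) →
    ∀ U : Finset (Fin k), 2 ≤ U.card →
      binomProb (p i) (Finset.univ.filter (fun A : Finset (G i) =>
        ε * (p i) ^ U.card * (projCard (distinctPart (S i)) U : ℝ) ≤
          |(projCardIn (distinctPart (S i)) U A : ℝ) -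
            (p i) ^ U.card * (projCard (distinctPart (S i)) U : ℝ)|)) ≤ ε'

/-- `(S,G)` is `ρ-k`-uniform: for every `U` with `|U| ≥ 2`, all nonempty fibers of `π_U` on
`S^{(k)}` have size at least `ρ` times the maximal fiber size. -/
def RhoUniform {k : ℕ} {G : Type} (ρ : ℝ) (S : Finset (Fin k → G)) : Prop :=
  ∀ U : Finset (Fin k), 2 ≤ U.card →
    ∀ x ∈ distinctPart S, ∀ y ∈ distinctPart S,
      ρ * (((distinctPart S).filter (fun z => ∀ j ∈ U, z j = y j)).card : ℝ)
        ≤ (((distinctPart S).filter (fun z => ∀ j ∈ U, z j = x j)).card : ℝ)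

/-- The threshold quantity `max_{2 ≤ ℓ ≤ k} (α_ℓ^k / α_1^k)^{1/(ℓ-1)}`. -/
noncomputable def pMax {k : ℕ} {G : Type} [Fintype G] (S : Finset (Fin k → G)) : ℝ :=
  sSup {x : ℝ | ∃ ℓ : ℕ, 2 ≤ ℓ ∧ ℓ ≤ k ∧
    x = ((alphaR S ℓ : ℝ) / (alphaR S 1 : ℝ)) ^ (1 / ((ℓ:ℝ) - 1))}

/-!
The maximum defining `pMax` is attained at some `ℓ`, so `p ≤ c * pMax S` gives
`p ^ (ℓ - 1) * α₁ ≤ c * α_ℓ`. Choose `U` with `|U| = ℓ` whose largest fibre over `S^{(k)}` has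
`α_ℓ` elements. By uniformity all nonempty fibres have at least `ρ * α_ℓ` elements, so
`ρ * α_ℓ * |π_U(S^{(k)})| ≤ |S^{(k)}| ≤ α₁ * |G|`, and therefore `p ^ ℓ * |π_U(S^{(k)})|`, the
expected number of points of `π_U(S^{(k)})` in `[G]_p`, is at most `(c / ρ) * p * |G|`. For small
`c` this is a small fraction of the expected size of `[G]_p`. Hence with high probability one can
delete, for a fixed `u ∈ U`, the `u`-th coordinates of all these points and still keep a proportion
`δ` of the random set. What remains contains no tuple of `S^{(k)}`.
-/

universe u

section Projections

variable {k : ℕ} {G : Type}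

/-- The fibre of the projection `π_U` on `S` through the tuple `g`. A point of `G^{|U|}` is encoded
by any of its extensions to a tuple in `G^k`, as in the definition of `alphaR`. -/
noncomputable def projFiber (S : Finset (Fin k → G)) (U : Finset (Fin k)) (g : Fin k → G) :
    Finset (Fin k → G) :=
  S.filter fun x => ∀ j ∈ U, x j = g j

lemma filter_restrict_eq (S : Finset (Fin k → G)) (U : Finset (Fin k)) (g : Fin k → G) :
    S.filter (fun x => U.restrict x = U.restrict g) = projFiber S U g :=
  filter_congr fun x _ => by simp [funext_iff]

lemma projFiber_congr (S : Finset (Fin k → G)) {U : Finset (Fin k)} {g h : Fin k → G}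
    (hgh : ∀ j ∈ U, g j = h j) : projFiber S U g = projFiber S U h :=
  filter_congr fun _ _ => forall₂_congr fun j hj => by rw [hgh j hj]

lemma card_projFiber_pos {S : Finset (Fin k → G)} {x : Fin k → G} (hx : x ∈ S)
    (U : Finset (Fin k)) : 0 < #(projFiber S U x) :=
  card_pos.2 ⟨x, mem_filter.2 ⟨hx, fun _ _ => rfl⟩⟩

lemma card_le_mul_projCard {S : Finset (Fin k → G)} {U : Finset (Fin k)} {m : ℕ}
    (hm : ∀ x ∈ S, #(projFiber S U x) ≤ m) : #S ≤ m * projCard S U :=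
  card_le_mul_card_image S m <| forall_mem_image.2 fun x hx =>
    (filter_restrict_eq S U x).symm ▸ hm x hx

lemma projCard_mul_le_card {S : Finset (Fin k → G)} {U : Finset (Fin k)} {m : ℝ}
    (hm : ∀ x ∈ S, m ≤ #(projFiber S U x)) : projCard S U * m ≤ #S := by
  rw [card_eq_sum_card_image U.restrict S, Nat.cast_sum, ← nsmul_eq_mul]
  refine card_nsmul_le_sum _ _ _ <| forall_mem_image.2 fun x hx => ?_
  exact (filter_restrict_eq S U x).symm ▸ hm x hx

lemma projCard_le_card_pow [Fintype G] (S : Finset (Fin k → G)) (U : Finset (Fin k)) :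
    projCard S U ≤ Fintype.card G ^ #U :=
  (card_le_univ _).trans_eq (by simp)

end Projections

section DegreesOfFreedom

variable {k : ℕ} {G : Type} [Fintype G] {S : Finset (Fin k → G)}

lemma card_projFiber_le_alphaR (S : Finset (Fin k → G)) (U : Finset (Fin k)) (g : Fin k → G) :
    #(projFiber (distinctPart S) U g) ≤ alphaR S #U :=
  (le_sup (f := fun g => #(projFiber (distinctPart S) U g)) (mem_univ g)).trans <|
    le_sup (f := fun U => univ.sup fun g => #(projFiber (distinctPart S) U g))
      (mem_filter.2 ⟨mem_univ U, rfl⟩)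

lemma card_distinctPart_le_alphaR_mul_pow (S : Finset (Fin k → G)) (U : Finset (Fin k)) :
    #(distinctPart S) ≤ alphaR S #U * Fintype.card G ^ #U :=
  (card_le_mul_projCard fun x _ => card_projFiber_le_alphaR S U x).trans <|
    Nat.mul_le_mul_left _ (projCard_le_card_pow _ U)

lemma alphaR_pos (hS : (distinctPart S).Nonempty) {ℓ : ℕ} (hℓ : ℓ ≤ k) : 0 < alphaR S ℓ := by
  obtain ⟨x, hx⟩ := hS
  obtain ⟨U, -, rfl⟩ := exists_subset_card_eq (s := (univ : Finset (Fin k))) (by simpa using hℓ)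
  exact (card_projFiber_pos hx U).trans_le (card_projFiber_le_alphaR S U x)

lemma exists_card_projFiber_eq_alphaR (hS : (distinctPart S).Nonempty) {ℓ : ℕ} (hℓ : ℓ ≤ k) :
    ∃ U : Finset (Fin k), #U = ℓ ∧
      ∃ y ∈ distinctPart S, #(projFiber (distinctPart S) U y) = alphaR S ℓ := by
  have hne : (univ.filter fun U : Finset (Fin k) => #U = ℓ).Nonempty := by
    obtain ⟨U, -, hU⟩ := exists_subset_card_eq (s := (univ : Finset (Fin k))) (by simpa using hℓ)
    exact ⟨U, mem_filter.2 ⟨mem_univ U, hU⟩⟩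
  obtain ⟨U, hU, hUsup⟩ := exists_mem_eq_sup _ hne fun U =>
    univ.sup fun g => #(projFiber (distinctPart S) U g)
  obtain ⟨g, -, hgsup⟩ := exists_mem_eq_sup univ ⟨hS.choose, mem_univ _⟩ fun g =>
    #(projFiber (distinctPart S) U g)
  have hg : alphaR S ℓ = #(projFiber (distinctPart S) U g) := hUsup.trans hgsup
  obtain ⟨y, hy⟩ := card_pos.1 (hg ▸ alphaR_pos hS hℓ)
  obtain ⟨hyS, hyg⟩ := mem_filter.1 hy
  exact ⟨U, (mem_filter.1 hU).2, y, hyS, by rw [hg, projFiber_congr _ hyg]⟩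

lemma RhoUniform.exists_projCard_mul_alphaR_le {ρ : ℝ} (hunif : RhoUniform ρ S)
    (hS : (distinctPart S).Nonempty) {ℓ : ℕ} (hℓ2 : 2 ≤ ℓ) (hℓk : ℓ ≤ k) :
    ∃ U : Finset (Fin k), #U = ℓ ∧
      projCard (distinctPart S) U * (ρ * alphaR S ℓ) ≤ #(distinctPart S) := by
  obtain ⟨U, rfl, y, hy, hyα⟩ := exists_card_projFiber_eq_alphaR hS hℓk
  refine ⟨U, rfl, projCard_mul_le_card fun x hx => ?_⟩
  rw [← hyα]
  exact hunif U hℓ2 x hx y hy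

lemma exists_pMax_pow_eq (hk : 2 ≤ k) (S : Finset (Fin k → G)) :
    ∃ m : ℕ, 1 ≤ m ∧ m < k ∧ pMax S ^ m = alphaR S (m + 1) / alphaR S 1 := by
  let f : ℕ → ℝ := fun ℓ => ((alphaR S ℓ : ℝ) / alphaR S 1) ^ (1 / ((ℓ : ℝ) - 1))
  have hfin : {x | ∃ ℓ : ℕ, 2 ≤ ℓ ∧ ℓ ≤ k ∧ x = f ℓ}.Finite := by
    refine ((Set.finite_Icc 2 k).image f).subset ?_
    rintro _ ⟨ℓ, hℓ2, hℓk, rfl⟩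
    exact Set.mem_image_of_mem f ⟨hℓ2, hℓk⟩
  obtain ⟨ℓ, hℓ2, hℓk, hℓ⟩ : pMax S ∈ {x | ∃ ℓ : ℕ, 2 ≤ ℓ ∧ ℓ ≤ k ∧ x = f ℓ} :=
    Set.Nonempty.csSup_mem ⟨f 2, 2, le_rfl, hk, rfl⟩ hfin
  obtain ⟨m, rfl⟩ : ∃ m, ℓ = m + 1 := ⟨ℓ - 1, by omega⟩
  have hm : 1 / (((m + 1 : ℕ) : ℝ) - 1) = (m : ℝ)⁻¹ := by simp
  refine ⟨m, by omega, by omega, ?_⟩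
  rw [hℓ]
  dsimp only [f]
  rw [hm, Real.rpow_inv_natCast_pow (by positivity) (by omega)]

lemma exists_pow_mul_alphaR_one_le (hk : 2 ≤ k) {c p : ℝ} (hc0 : 0 ≤ c) (hc1 : c ≤ 1)
    (hp0 : 0 ≤ p) (hp : p ≤ c * pMax S) :
    ∃ m : ℕ, 1 ≤ m ∧ m < k ∧ p ^ m * alphaR S 1 ≤ c * alphaR S (m + 1) := by
  obtain ⟨m, hm1, hmk, hm⟩ := exists_pMax_pow_eq hk S
  refine ⟨m, hm1, hmk, mul_le_of_le_div₀ (by positivity) (by positivity) ?_⟩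
  calc p ^ m ≤ (c * pMax S) ^ m := pow_le_pow_left₀ hp0 hp m
    _ = c ^ m * (alphaR S (m + 1) / alphaR S 1) := by rw [mul_pow, hm]
    _ ≤ c * (alphaR S (m + 1) / alphaR S 1) := by
        gcongr
        exact pow_le_of_le_one hc0 hc1 (by omega)
    _ = c * alphaR S (m + 1) / alphaR S 1 := (mul_div_assoc ..).symm

lemma RhoUniform.exists_pow_mul_projCard_le {ρ : ℝ} (hunif : RhoUniform ρ S) (hk : 2 ≤ k)
    {c p : ℝ} (hc0 : 0 ≤ c) (hc1 : c ≤ 1) (hp0 : 0 ≤ p) (hp : p ≤ c * pMax S) :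
    ∃ U : Finset (Fin k), 2 ≤ #U ∧
      p ^ #U * projCard (distinctPart S) U * ρ ≤ c * (p * Fintype.card G) := by
  obtain hS | hS := (distinctPart S).eq_empty_or_nonempty
  · refine ⟨univ, by simpa using hk, ?_⟩
    simp only [hS, projCard, image_empty, card_empty, Nat.cast_zero, mul_zero, zero_mul]
    positivity
  obtain ⟨m, hm1, hmk, hm⟩ := exists_pow_mul_alphaR_one_le hk hc0 hc1 hp0 hp
  obtain ⟨U, hU, hUproj⟩ := hunif.exists_projCard_mul_alphaR_le hS (ℓ := m + 1) (by omega) hmk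
  refine ⟨U, by omega, ?_⟩
  have hcard : (#(distinctPart S) : ℝ) ≤ alphaR S 1 * Fintype.card G := by
    have hle := card_distinctPart_le_alphaR_mul_pow S {(⟨0, by omega⟩ : Fin k)}
    rw [card_singleton, pow_one] at hle
    exact_mod_cast hle
  have hα : (0 : ℝ) < alphaR S (m + 1) := by exact_mod_cast alphaR_pos hS hmk
  refine le_of_mul_le_mul_right ?_ hα
  calc p ^ #U * projCard (distinctPart S) U * ρ * alphaR S (m + 1)
      = p ^ (m + 1) * (projCard (distinctPart S) U * (ρ * alphaR S (m + 1))) := by rw [hU]; ring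
    _ ≤ p ^ (m + 1) * (alphaR S 1 * Fintype.card G) := 
        mul_le_mul_of_nonneg_left (hUproj.trans hcard) (by positivity)
    _ = p ^ m * alphaR S 1 * (p * Fintype.card G) := by ring
    _ ≤ c * alphaR S (m + 1) * (p * Fintype.card G) := by gcongr
    _ = c * (p * Fintype.card G) * alphaR S (m + 1) := by ring

end DegreesOfFreedom

section BinomialRandomSubset

variable {G : Type} [Fintype G] {p : ℝ}

lemma binomProb_nonneg (hp0 : 0 ≤ p) (hp1 : p ≤ 1) (E : Finset (Finset G)) :
    0 ≤ binomProb p E :=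
  have : 0 ≤ 1 - p := sub_nonneg.2 hp1
  sum_nonneg fun _ _ => by positivity

lemma binomProb_mono (hp0 : 0 ≤ p) (hp1 : p ≤ 1) {E F : Finset (Finset G)} (hEF : E ⊆ F) :
    binomProb p E ≤ binomProb p F :=
  have : 0 ≤ 1 - p := sub_nonneg.2 hp1
  sum_le_sum_of_subset_of_nonneg hEF fun _ _ _ => by positivity

lemma binomProb_union_le (hp0 : 0 ≤ p) (hp1 : p ≤ 1) (E F : Finset (Finset G)) :
    binomProb p (E ∪ F) ≤ binomProb p E + binomProb p F :=
  (le_add_of_nonneg_right (binomProb_nonneg hp0 hp1 (E ∩ F))).trans_eq (sum_union_inter ..)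

lemma sum_binomial_mul_sub_card_sq (p : ℝ) :
    ∑ A : Finset G, p ^ #A * (1 - p) ^ (Fintype.card G - #A) * (Fintype.card G * p - #A) ^ 2 =
      Fintype.card G * p * (1 - p) := by
  have hvar := congrArg (Polynomial.eval p) (bernsteinPolynomial.variance ℝ (Fintype.card G))
  simp only [bernsteinPolynomial, Polynomial.eval_finsetSum, nsmul_eq_mul, Polynomial.eval_mul,
    Polynomial.eval_pow, Polynomial.eval_sub, Polynomial.eval_natCast, Polynomial.eval_X,
    Polynomial.eval_one] at hvar
  rw [← hvar, ← powerset_univ, sum_powerset_apply_card fun m =>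
    p ^ m * (1 - p) ^ (Fintype.card G - m) * (Fintype.card G * p - m) ^ 2, card_univ]
  refine sum_congr rfl fun m _ => ?_
  rw [nsmul_eq_mul]
  ring

lemma binomProb_abs_sub_card_ge_le (hp0 : 0 ≤ p) (hp1 : p ≤ 1) {t : ℝ} (ht : 0 < t) :
    binomProb p (univ.filter fun A : Finset G => t ≤ |Fintype.card G * p - #A|) ≤
      Fintype.card G * p * (1 - p) / t ^ 2 := by
  have : 0 ≤ 1 - p := sub_nonneg.2 hp1
  rw [le_div_iff₀ (by positivity), binomProb, sum_mul, ← sum_binomial_mul_sub_card_sq p]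
  refine (sum_le_sum fun A hA => ?_).trans <|
    sum_le_sum_of_subset_of_nonneg (subset_univ _) fun A _ _ => by positivity
  gcongr ?_ * ?_
  rw [← sq_abs (_ - _)]
  exact pow_le_pow_left₀ ht.le (mem_filter.1 hA).2 2

lemma binomProb_card_lt_half_le (hp0 : 0 ≤ p) (hp1 : p ≤ 1) (hpG : 0 < p * Fintype.card G) :
    binomProb p (univ.filter fun A : Finset G => (#A : ℝ) < p * Fintype.card G / 2) ≤
      4 / (p * Fintype.card G) := by
  have hsub : (univ.filter fun A : Finset G => (#A : ℝ) < p * Fintype.card G / 2) ⊆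
      univ.filter fun A : Finset G => p * Fintype.card G / 2 ≤ |Fintype.card G * p - #A| :=
    monotone_filter_right _ fun A _ hA => le_abs.2 (Or.inl (by linarith))
  calc binomProb p (univ.filter fun A : Finset G => (#A : ℝ) < p * Fintype.card G / 2)
      ≤ Fintype.card G * p * (1 - p) / (p * Fintype.card G / 2) ^ 2 :=
        (binomProb_mono hp0 hp1 hsub).trans
          (binomProb_abs_sub_card_ge_le hp0 hp1 (half_pos hpG))
    _ ≤ p * Fintype.card G / (p * Fintype.card G / 2) ^ 2 := by
        rw [mul_comm (Fintype.card G : ℝ)]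
        gcongr ?_ / _
        exact mul_le_of_le_one_right hpG.le (sub_le_self 1 hp0)
    _ = 4 / (p * Fintype.card G) := by
        field_simp
        norm_num

end BinomialRandomSubset

section Stability

lemma tendsto_card_of_tendsto_mul_card {ι : Type u} {l : Filter ι} {G : ι → Type}
    [∀ i, Fintype (G i)] {p : ι → ℝ} (hp : ∀ i, p i ≤ 1)
    (hpG : Tendsto (fun i => p i * (Fintype.card (G i) : ℝ)) l atTop) :
    Tendsto (fun i => Fintype.card (G i)) l atTop :=
  tendsto_natCast_atTop_iff.1 <|
    tendsto_atTop_mono (fun i => mul_le_of_le_one_left (Nat.cast_nonneg _) (hp i)) hpG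

variable {k : ℕ}

/-- The event that the random set `[G]_p` contains more than twice the expected number
`p ^ |U| * |π_U(S^{(k)})|` of points of `π_U(S^{(k)})`. Concentration enters the
0-statement only through the probability of this event. -/
noncomputable def upperTail {G : Type} [Fintype G] (S : Finset (Fin k → G)) (p : ℝ)
    (U : Finset (Fin k)) : Finset (Finset G) :=
  univ.filter fun A =>
    2 * (p ^ #U * projCard (distinctPart S) U) < projCardIn (distinctPart S) U A

lemma Concentrated.tendsto_binomProb_upperTail {G : ℕ → Type} [∀ i, Fintype (G i)]
    {S : ∀ i, Finset (Fin k → G i)} {p : ℕ → ℝ} (hconc : Concentrated k G S p)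
    (hp : ∀ i, 0 ≤ p i ∧ p i ≤ 1) (hG : Tendsto (fun i => Fintype.card (G i)) atTop atTop)
    {U : Finset (Fin k)} (hU : 2 ≤ #U) :
    Tendsto (fun i => binomProb (p i) (upperTail (S i) (p i) U)) atTop (𝓝 0) := by
  refine tendsto_order.2 ⟨fun a ha => .of_forall fun i =>
    ha.trans_le (binomProb_nonneg (hp i).1 (hp i).2 _), fun ε hε => ?_⟩
  obtain ⟨n₀, hn₀⟩ := hconc 1 (ε / 2) one_pos (half_pos hε)
  filter_upwards [hG.eventually_ge_atTop n₀] with i hi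
  refine (binomProb_mono (hp i).1 (hp i).2 ?_).trans_lt
    ((hn₀ i hi U hU).trans_lt (half_lt_self hε))
  exact monotone_filter_right _ fun A _ hA => le_abs.2 (Or.inl (by linarith))

lemma not_stableK_of_projCardIn_le {G : Type} {δ : ℝ} {S : Finset (Fin k → G)}
    {U : Finset (Fin k)} (hU : U.Nonempty) {A : Finset G}
    (hA : projCardIn (distinctPart S) U A ≤ (1 - δ) * #A) : ¬ StableK δ S A := by
  intro hstable
  obtain ⟨u, hu⟩ := hU
  let F := (distinctPart S).filter fun x => ∀ j ∈ U, x j ∈ A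
  let B := F.image fun x => x u
  have hB : #B ≤ projCardIn (distinctPart S) U A := by
    have hBimage : B = (F.image U.restrict).image fun y => y ⟨u, hu⟩ := by
      rw [image_image]
      rfl
    exact hBimage ▸ card_image_le
  have hsdiff : δ * (#A : ℝ) ≤ #(A \ B) := by
    have hAB : (#A : ℝ) ≤ #(A \ B) + #B := by exact_mod_cast card_le_card_sdiff_add_card
    have hB' : (#B : ℝ) ≤ projCardIn (distinctPart S) U A := by exact_mod_cast hB
    linarith
  obtain ⟨-, x, hx, hxAB⟩ := hstable (A \ B) sdiff_subset hsdiff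
  have hxF : x ∈ F := mem_filter.2 ⟨hx, fun j _ => (mem_sdiff.1 (hxAB j)).1⟩
  exact (mem_sdiff.1 (hxAB u)).2 (mem_image_of_mem _ hxF)

lemma binomProb_stableK_le {G : Type} [Fintype G] {δ p : ℝ} (hδ : δ ≤ 1) (hp0 : 0 ≤ p)
    (hp1 : p ≤ 1) (hpG : 0 < p * Fintype.card G) {S : Finset (Fin k → G)} {U : Finset (Fin k)}
    (hU : U.Nonempty)
    (hproj : p ^ #U * projCard (distinctPart S) U ≤ (1 - δ) / 4 * (p * Fintype.card G)) :
    binomProb p (univ.filter fun A : Finset G => StableK δ S A) ≤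
      binomProb p (upperTail S p U) + 4 / (p * Fintype.card G) := by
  let small : Finset (Finset G) := univ.filter fun A => (#A : ℝ) < p * Fintype.card G / 2
  have hsub : (univ.filter fun A : Finset G => StableK δ S A) ⊆ upperTail S p U ∪ small := by
    intro A hA
    by_contra hAbad
    simp only [upperTail, small, mem_union, mem_filter, mem_univ, true_and, not_or, not_lt]
      at hAbad
    obtain ⟨hAtail, hAcard⟩ := hAbad
    refine not_stableK_of_projCardIn_le hU ?_ (mem_filter.1 hA).2
    have hAcard' := mul_le_mul_of_nonneg_left hAcard (sub_nonneg.2 hδ)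
    linarith
  calc binomProb p (univ.filter fun A : Finset G => StableK δ S A)
      ≤ binomProb p (upperTail S p U) + binomProb p small :=
        (binomProb_mono hp0 hp1 hsub).trans (binomProb_union_le hp0 hp1 _ _)
    _ ≤ binomProb p (upperTail S p U) + 4 / (p * Fintype.card G) := by
        gcongr
        exact binomProb_card_lt_half_le hp0 hp1 hpG

lemma RhoUniform.binomProb_stableK_le_sum {G : Type} [Fintype G] {ρ δ p : ℝ}
    {S : Finset (Fin k → G)} (hunif : RhoUniform ρ S) (hk : 2 ≤ k) (hδ : δ ≤ 1) (hρ : 0 < ρ)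
    (hp0 : 0 ≤ p) (hp1 : p ≤ 1) (hpG : 0 < p * Fintype.card G)
    (hp : p ≤ min 1 (ρ * (1 - δ) / 4) * pMax S) :
    binomProb p (univ.filter fun A : Finset G => StableK δ S A) ≤
      ∑ U : Finset (Fin k) with 2 ≤ #U, binomProb p (upperTail S p U) +
        4 / (p * Fintype.card G) := by
  have : 0 ≤ 1 - δ := sub_nonneg.2 hδ
  obtain ⟨U, hU2, hU⟩ :=
    hunif.exists_pow_mul_projCard_le hk (by positivity) (min_le_left _ _) hp0 hp
  have hproj : p ^ #U * projCard (distinctPart S) U ≤ (1 - δ) / 4 * (p * Fintype.card G) := by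
    refine le_of_mul_le_mul_right (hU.trans ?_) hρ
    calc min 1 (ρ * (1 - δ) / 4) * (p * Fintype.card G)
        ≤ ρ * (1 - δ) / 4 * (p * Fintype.card G) := by gcongr; exact min_le_right _ _
      _ = (1 - δ) / 4 * (p * Fintype.card G) * ρ := by ring
  refine (binomProb_stableK_le hδ hp0 hp1 hpG (card_pos.1 (by omega)) hproj).trans ?_
  gcongr
  exact single_le_sum (f := fun U => binomProb p (upperTail S p U))
    (fun U _ => binomProb_nonneg hp0 hp1 _) (mem_filter.2 ⟨mem_univ U, hU2⟩)

end Stability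

theorem stmt9_general {k : ℕ} (hk : 2 ≤ k) {δ ρ : ℝ} (hδ : δ < 1) (hρ : 0 < ρ) :
    ∃ c : ℝ, 0 < c ∧
      ∀ {ι : Type u} {l : Filter ι} (G : ι → Type) [∀ i, Fintype (G i)]
        (S : ∀ i, Finset (Fin k → G i)),
      (∀ i, RhoUniform ρ (S i)) →
      ∀ p : ι → ℝ, (∀ i, 0 ≤ p i ∧ p i ≤ 1) →
        Tendsto (fun i => p i * (Fintype.card (G i) : ℝ)) l atTop →
        (∀ i, p i ≤ c * pMax (S i)) →
        (∀ U : Finset (Fin k), 2 ≤ #U →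
          Tendsto (fun i => binomProb (p i) (upperTail (S i) (p i) U)) l (𝓝 0)) →
        Tendsto (fun i => binomProb (p i)
            (univ.filter (fun A : Finset (G i) => StableK δ (S i) A))) l (𝓝 0) := by
  have : 0 < 1 - δ := sub_pos.2 hδ
  refine ⟨min 1 (ρ * (1 - δ) / 4), by positivity, ?_⟩
  intro ι l G _ S hunif p hp hpG hpc htail
  have hbound : Tendsto (fun i => ∑ U : Finset (Fin k) with 2 ≤ #U,
      binomProb (p i) (upperTail (S i) (p i) U) + 4 / (p i * Fintype.card (G i))) l (𝓝 0) := by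
    simpa only [sum_const_zero, add_zero] using
      (tendsto_finsetSum _ fun U hU => htail U (mem_filter.1 hU).2).add (hpG.const_div_atTop 4)
  refine squeeze_zero' (.of_forall fun i => binomProb_nonneg (hp i).1 (hp i).2 _) ?_ hbound
  filter_upwards [hpG.eventually_gt_atTop 0] with i hi
  exact (hunif i).binomProb_stableK_le_sum hk hδ.le hρ (hp i).1 (hp i).2 hi (hpc i)

/-- the 0-statement for `ρ-k`-uniform sequences of configuration systems. -/
theorem stmt9 (k : ℕ) (hk : 2 ≤ k) (δ : ℝ) (hδ0 : 0 < δ) (hδ1 : δ < 1)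
    (ρ : ℝ) (hρ : 0 < ρ) :
    ∃ c : ℝ, 0 < c ∧
      ∀ (G : ℕ → Type) [∀ i, Fintype (G i)]
        (S : ∀ i, Finset (Fin k → G i)),
      (∀ i, RhoUniform ρ (S i)) →
      ∀ p : ℕ → ℝ, (∀ i, 0 ≤ p i ∧ p i ≤ 1) →
        Tendsto (fun i => p i * (Fintype.card (G i) : ℝ)) atTop atTop →
        Tendsto (fun i => p i * ((distinctPart (S i)).card : ℝ) ^ ((1:ℝ)/(k:ℝ)))
          atTop atTop →
        (∀ i, p i ≤ c * pMax (S i)) →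
        Concentrated k G S p →
        Tendsto (fun i => binomProb (p i)
            (Finset.univ.filter (fun A : Finset (G i) => StableK δ (S i) A)))
          atTop (nhds 0) := by
  obtain ⟨c, hc, h⟩ := stmt9_general hk hδ1 hρ
  exact ⟨c, hc, fun G _ S hunif p hp hpG _ hpc hconc => h G S hunif p hp hpG hpc fun _ hU =>
    hconc.tendsto_binomProb_upperTail hp
      (tendsto_card_of_tendsto_mul_card (fun i => (hp i).2) hpG) hU⟩
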